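/- arXiv:1810.07956 — 2 statements merged into one kernel-verified Lean document; each statement's English description precedes it below -/
import Mathlib

section
/- For n odd, A_n(p,0) = A_n(0,p), and for n even, A_n(p,0) = (1+p)·A_n(0,p), as polynomial identities in p. -/
open Finset

/-- The set of (0-based) descent indices of a permutation of `Fin n`:
`i` is a descent index if `π i > π (i+1)` (so the 1-based descent position is `i+1`). -/
def descentSet {n : ℕ} (π : Equiv.Perm (Fin n)) : Finset ℕ :=
  (Finset.range n).filter
    (fun i => ∃ h : i + 1 < n, π ⟨i + 1, h⟩ < π ⟨i, Nat.lt_of_succ_lt h⟩)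

/-- The number of descents of `π`. -/
def des {n : ℕ} (π : Equiv.Perm (Fin n)) : ℕ := (descentSet π).card

/-- The number of descents of `π` at odd (1-based) positions, i.e. even 0-based indices. -/
def odes {n : ℕ} (π : Equiv.Perm (Fin n)) : ℕ :=
  ((descentSet π).filter (fun i => Even i)).card

/-- The number of descents of `π` at even (1-based) positions, i.e. odd 0-based indices. -/
def edes {n : ℕ} (π : Equiv.Perm (Fin n)) : ℕ :=
  ((descentSet π).filter (fun i => Odd i)).card

/-- The refined Eulerian polynomial `A_n(p,q) = Σ_π p^{odes π} q^{edes π}`. -/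
def refinedEulerian (n : ℕ) (p q : ℝ) : ℝ :=
  ∑ π : Equiv.Perm (Fin n), p ^ odes π * q ^ edes π

/-- The Eulerian polynomial `A_n(q) = Σ_π q^{des π}` as a function. -/
def eulerianEval (n : ℕ) (q : ℝ) : ℝ :=
  ∑ π : Equiv.Perm (Fin n), q ^ des π

/-- The Eulerian polynomial `A_n(q)` as a polynomial. -/
noncomputable def eulerianPolynomial (n : ℕ) : Polynomial ℝ :=
  ∑ π : Equiv.Perm (Fin n), Polynomial.X ^ des π

/-- The Eulerian number `A_{n,k}`: the number of permutations of `[n]` with `k` descents. -/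
def eulerianNumber (n k : ℕ) : ℕ :=
  (Finset.univ.filter (fun π : Equiv.Perm (Fin n) => des π = k)).card

/-- A permutation `a_1 a_2 … a_n` is alternating if `a_1 > a_2 < a_3 > ⋯`. -/
def IsAlternating {n : ℕ} (π : Equiv.Perm (Fin n)) : Prop :=
  ∀ i : ℕ, ∀ h : i + 1 < n,
    (π ⟨i + 1, h⟩ < π ⟨i, Nat.lt_of_succ_lt h⟩ ↔ Even i)

open scoped Classical in
/-- The Euler number `E_n`: the number of alternating permutations of `[n]`. -/
noncomputable def eulerNumber (n : ℕ) : ℕ :=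
  (Finset.univ.filter (fun π : Equiv.Perm (Fin n) => IsAlternating π)).card

/-- `a_{n,k}`: the number of permutations of `[n]` with `k` even descents and no odd descents. -/
def aNum (n k : ℕ) : ℕ :=
  (Finset.univ.filter (fun π : Equiv.Perm (Fin n) => edes π = k ∧ odes π = 0)).card

/-- The product of `b i` over the descent indices `i` of `π`. -/
noncomputable def descentWeight (b : ℕ → ℝ) {n : ℕ} (π : Equiv.Perm (Fin n)) : ℝ :=
  ∏ i ∈ descentSet π, b i

/-- The permutation of `Fin (n + 1)` with last value `j` whose other values are ordered as
those of `σ`. -/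
def appendValue {n : ℕ} (j : Fin (n + 1)) (σ : Equiv.Perm (Fin n)) : Equiv.Perm (Fin (n + 1)) :=
  ((finSuccEquiv' (Fin.last n)).trans (Equiv.optionCongr σ)).trans (finSuccEquiv' j).symm

theorem appendValue_last {n : ℕ} (j : Fin (n + 1)) (σ : Equiv.Perm (Fin n)) :
    appendValue j σ (Fin.last n) = j := by
  simp [appendValue]

theorem appendValue_castSucc {n : ℕ} (j : Fin (n + 1)) (σ : Equiv.Perm (Fin n)) (i : Fin n) :
    appendValue j σ i.castSucc = j.succAbove (σ i) := by
  simp [appendValue, finSuccEquiv'_last_apply_castSucc]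

theorem appendValue_bijective (n : ℕ) :
    Function.Bijective
      (fun x : Fin (n + 1) × Equiv.Perm (Fin n) => appendValue x.1 x.2) := by
  rw [Fintype.bijective_iff_injective_and_card]
  refine ⟨?_, by simp [Fintype.card_perm, Nat.factorial_succ]⟩
  rintro ⟨j, σ⟩ ⟨j', σ'⟩ h
  have hj : j = j' := by
    simpa only [appendValue_last] using DFunLike.congr_fun h (Fin.last n)
  subst hj
  refine Prod.ext rfl (Equiv.ext fun i => ?_)
  have hi := DFunLike.congr_fun h i.castSucc
  simp only [appendValue_castSucc] at hi
  exact Fin.succAbove_right_injective hi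

theorem mem_descentSet {n : ℕ} (π : Equiv.Perm (Fin n)) (i : ℕ) :
    i ∈ descentSet π ↔
      ∃ h : i + 1 < n, π ⟨i + 1, h⟩ < π ⟨i, Nat.lt_of_succ_lt h⟩ := by
  simp only [descentSet, mem_filter, mem_range, and_iff_right_iff_imp]
  rintro ⟨h, -⟩
  exact Nat.lt_of_succ_lt h

theorem mem_descentSet_appendValue_of_lt {n : ℕ} (j : Fin (n + 2)) (σ : Equiv.Perm (Fin (n + 1)))
    {i : ℕ} (hi : i < n) : i ∈ descentSet (appendValue j σ) ↔ i ∈ descentSet σ := by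
  have e₁ := appendValue_castSucc j σ ⟨i + 1, by omega⟩
  have e₂ := appendValue_castSucc j σ ⟨i, by omega⟩
  simp only [Fin.castSucc_mk] at e₁ e₂
  simp only [mem_descentSet, e₁, e₂, Fin.succAbove_lt_succAbove_iff]
  exact ⟨fun ⟨_, h⟩ => ⟨by omega, h⟩, fun ⟨_, h⟩ => ⟨by omega, h⟩⟩

theorem mem_descentSet_appendValue_self {n : ℕ} (j : Fin (n + 2))
    (σ : Equiv.Perm (Fin (n + 1))) :
    n ∈ descentSet (appendValue j σ) ↔ ¬ (σ (Fin.last n) : ℕ) < j := by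
  have e₁ := appendValue_last j σ
  have e₂ := appendValue_castSucc j σ (Fin.last n)
  simp only [Fin.last, Fin.castSucc_mk] at e₁ e₂
  simp only [mem_descentSet, e₁, e₂, Fin.lt_succAbove_iff_le_castSucc]
  simp [Fin.le_def, Fin.last]

theorem descentWeight_appendValue (b : ℕ → ℝ) {n : ℕ} (j : Fin (n + 2))
    (σ : Equiv.Perm (Fin (n + 1))) :
    descentWeight b (appendValue j σ) =
      descentWeight b σ * if (σ (Fin.last n) : ℕ) < j then 1 else b n := by
  have hn : n ∉ descentSet σ := by simp [mem_descentSet]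
  have key : descentSet (appendValue j σ) =
      if (σ (Fin.last n) : ℕ) < j then descentSet σ else insert n (descentSet σ) := by
    ext i
    rcases lt_trichotomy i n with hi | rfl | hi
    · rw [mem_descentSet_appendValue_of_lt j σ hi]
      split_ifs <;> simp [hi.ne]
    · rw [mem_descentSet_appendValue_self]
      split_ifs with h <;> simp [h, hn]
    · have h₁ : i ∉ descentSet (appendValue j σ) := by
        rw [mem_descentSet]; rintro ⟨h, -⟩; omega
      have h₂ : i ∉ descentSet σ := by
        rw [mem_descentSet]; rintro ⟨h, -⟩; omega
      split_ifs <;> simp [h₁, h₂, hi.ne']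
  unfold descentWeight
  rw [key]
  split_ifs
  · simp
  · rw [prod_insert hn, mul_comm]

/-- The total `descentWeight` of the permutations of `Fin (n + 1)` with last value `j`,
computed recursively by deleting the last value. -/
noncomputable def lastValueWeight (b : ℕ → ℝ) : ℕ → ℕ → ℝ
  | 0, _ => 1
  | n + 1, j => ∑ i ∈ range (n + 1), lastValueWeight b n i * if i < j then 1 else b n

theorem sum_descentWeight_mul (b : ℕ → ℝ) (n : ℕ) (h : ℕ → ℝ) :
    ∑ π : Equiv.Perm (Fin (n + 1)), descentWeight b π * h (π (Fin.last n)) =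
      ∑ j ∈ range (n + 1), lastValueWeight b n j * h j := by
  induction n generalizing h with
  | zero => simp [descentWeight, descentSet, lastValueWeight]
  | succ n ih =>
    rw [← (appendValue_bijective (n + 1)).sum_comp, Fintype.sum_prod_type,
      ← Fin.sum_univ_eq_sum_range (fun j => lastValueWeight b (n + 1) j * h j)]
    refine sum_congr rfl fun j _ => ?_
    simp only [appendValue_last, descentWeight_appendValue, ← sum_mul]
    rw [ih (fun i => if i < (j : ℕ) then 1 else b n), lastValueWeight]

theorem sum_descentWeight (b : ℕ → ℝ) (n : ℕ) :
    ∑ π : Equiv.Perm (Fin (n + 1)), descentWeight b π =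
      lastValueWeight b (n + 1) (n + 1) := by
  have h := sum_descentWeight_mul b n (fun _ => 1)
  simp only [mul_one] at h
  rw [h, lastValueWeight]
  exact sum_congr rfl fun i hi => by rw [if_pos (mem_range.mp hi), mul_one]

theorem lastValueWeight_succ_zero (b : ℕ → ℝ) (n : ℕ) :
    lastValueWeight b (n + 1) 0 = b n * lastValueWeight b (n + 1) (n + 1) := by
  simp only [lastValueWeight, mul_sum]
  refine sum_congr rfl fun i hi => ?_
  rw [if_pos (mem_range.mp hi), if_neg (Nat.not_lt_zero i)]
  ring

theorem lastValueWeight_succ_succ (b : ℕ → ℝ) {n j : ℕ} (hj : j ≤ n) :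
    lastValueWeight b (n + 1) (j + 1) =
      lastValueWeight b (n + 1) j + (1 - b n) * lastValueWeight b n j := by
  have h : ∀ i, (lastValueWeight b n i * if i < j + 1 then 1 else b n) =
      (lastValueWeight b n i * if i < j then 1 else b n) +
        if i = j then (1 - b n) * lastValueWeight b n i else 0 := by
    intro i
    rcases lt_trichotomy i j with hi | rfl | hi
    · simp [hi, hi.ne, hi.trans (Nat.lt_succ_self j)]
    · simp; ring
    · simp [hi.ne', not_lt.mpr hi.le, not_lt.mpr (Nat.succ_le_of_lt hi)]
  simp only [lastValueWeight]
  rw [sum_congr rfl fun i _ => h i, sum_add_distrib, sum_ite_eq',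
    if_pos (mem_range.mpr (Nat.lt_succ_of_le hj))]

/-- Newton's forward difference formula for `lastValueWeight b n`. -/
theorem lastValueWeight_eq_sum_choose (b : ℕ → ℝ) {n j : ℕ} (hj : j ≤ n) :
    lastValueWeight b n j = ∑ k ∈ range (j + 1), (j.choose k : ℝ) *
      ((∏ i ∈ range k, (1 - b (n - k + i))) * lastValueWeight b (n - k) 0) := by
  induction j generalizing n with
  | zero => simp
  | succ j ih =>
    obtain ⟨n, rfl⟩ : ∃ m, n = m + 1 := ⟨n - 1, by omega⟩
    rw [lastValueWeight_succ_succ b (by omega), ih (n := n + 1) (by omega), ih (n := n) (by omega),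
      sum_choose_succ_mul (fun k _ => (∏ i ∈ range k, (1 - b (n + 1 - k + i))) *
        lastValueWeight b (n + 1 - k) 0) j, add_comm]
    rw [add_comm, mul_sum]
    congr 1
    refine sum_congr rfl fun k hk => ?_
    have hk' : k ≤ n := by have := mem_range.mp hk; omega
    rw [Nat.add_sub_add_right, prod_range_succ, Nat.sub_add_cancel hk']
    ring

theorem lastValueWeight_self_div_factorial (b : ℕ → ℝ) (n : ℕ) :
    lastValueWeight b n n / n.factorial = ∑ x ∈ antidiagonal n,
      (∏ i ∈ range x.1, (1 - b (x.2 + i))) / x.1.factorial *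
        (lastValueWeight b x.2 0 / x.2.factorial) := by
  rw [lastValueWeight_eq_sum_choose b le_rfl, Nat.sum_antidiagonal_eq_sum_range_succ_mk, sum_div]
  refine sum_congr rfl fun k hk => ?_
  rw [Nat.cast_choose ℝ (Nat.lt_succ_iff.mp (mem_range.mp hk))]
  have := Nat.factorial_ne_zero n
  field_simp

/-- The weights equal to `p` at the indices of the same parity as `e` and to `0` elsewhere. -/
noncomputable def parityWeight (p : ℝ) (e : ℕ) (i : ℕ) : ℝ := if Even (i + e) then p else 0

theorem prod_one_sub_parityWeight (p : ℝ) (e m k : ℕ) :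
    ∏ i ∈ range k, (1 - parityWeight p e (m + i)) =
      if Even (m + e) then (1 - p) ^ ((k + 1) / 2) else (1 - p) ^ (k / 2) := by
  induction k generalizing m with
  | zero => simp
  | succ k ih =>
    have h := ih (m + 1)
    simp only [add_assoc, add_comm 1] at h
    rw [prod_range_succ', h]
    have e₁ : m + (e + 1) = m + e + 1 := by ring
    have e₂ : (k + 1 + 1) / 2 = k / 2 + 1 := by omega
    simp only [parityWeight, e₁, e₂, Nat.even_add_one, add_zero]
    split_ifs <;> simp [pow_succ]

theorem refinedEulerian_zero_right (n : ℕ) (p : ℝ) :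
    refinedEulerian (n + 1) p 0 = lastValueWeight (parityWeight p 0) (n + 1) (n + 1) := by
  rw [← sum_descentWeight, refinedEulerian]
  refine sum_congr rfl fun π _ => ?_
  simp only [descentWeight, parityWeight, odes, edes, add_zero, prod_ite, prod_const,
    Nat.not_even_iff_odd]

theorem refinedEulerian_zero_left (n : ℕ) (p : ℝ) :
    refinedEulerian (n + 1) 0 p = lastValueWeight (parityWeight p 1) (n + 1) (n + 1) := by
  rw [← sum_descentWeight, refinedEulerian]
  refine sum_congr rfl fun π _ => ?_
  simp only [descentWeight, parityWeight, odes, edes, Nat.even_add_one, prod_ite, prod_const,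
    Nat.not_even_iff_odd]
  simp only [Nat.not_odd_iff_even, mul_comm]

/-- The part of even degree of the exponential generating series of `u`. -/
noncomputable def evenSeries (u : ℕ → ℝ) : PowerSeries ℝ :=
  PowerSeries.mk fun n => if Even n then u n / n.factorial else 0

/-- The part of odd degree of the exponential generating series of `u`. -/
noncomputable def oddSeries (u : ℕ → ℝ) : PowerSeries ℝ :=
  PowerSeries.mk fun n => if Even n then 0 else u n / n.factorial

/-- The power series `cosh (√s X)`. -/
noncomputable def coshSeries (s : ℝ) : PowerSeries ℝ := evenSeries fun n => s ^ (n / 2)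

/-- The power series `sinh (√s X) / √s`. -/
noncomputable def sinhSeries (s : ℝ) : PowerSeries ℝ := oddSeries fun n => s ^ (n / 2)

theorem constantCoeff_coshSeries (s : ℝ) : PowerSeries.constantCoeff (coshSeries s) = 1 := by
  rw [← PowerSeries.coeff_zero_eq_constantCoeff_apply]
  simp [coshSeries, evenSeries]

theorem constantCoeff_sinhSeries (s : ℝ) : PowerSeries.constantCoeff (sinhSeries s) = 0 := by
  rw [← PowerSeries.coeff_zero_eq_constantCoeff_apply]
  simp [sinhSeries, oddSeries]

theorem derivative_coshSeries (s : ℝ) :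
    PowerSeries.derivative ℝ (coshSeries s) = PowerSeries.C s * sinhSeries s := by
  ext n
  rw [PowerSeries.coeff_derivative, PowerSeries.coeff_C_mul]
  simp only [coshSeries, sinhSeries, evenSeries, oddSeries, PowerSeries.coeff_mk,
    Nat.even_add_one, Nat.factorial_succ, Nat.cast_mul, Nat.cast_succ]
  split_ifs with h
  · simp_all
  · have e : (n + 1) / 2 = n / 2 + 1 := by grind
    rw [e, pow_succ]
    field_simp

theorem derivative_sinhSeries (s : ℝ) :
    PowerSeries.derivative ℝ (sinhSeries s) = coshSeries s := by
  ext n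
  rw [PowerSeries.coeff_derivative]
  simp only [coshSeries, sinhSeries, evenSeries, oddSeries, PowerSeries.coeff_mk,
    Nat.even_add_one, Nat.factorial_succ, Nat.cast_mul, Nat.cast_succ]
  split_ifs with h
  · have e : (n + 1) / 2 = n / 2 := by grind
    rw [e]
    field_simp
  · simp

theorem coshSeries_sq_sub (s : ℝ) :
    coshSeries s ^ 2 - PowerSeries.C s * sinhSeries s ^ 2 = 1 := by
  refine PowerSeries.derivative.ext ?_ ?_
  · simp only [pow_two, map_sub, Derivation.leibniz, smul_eq_mul, derivative_coshSeries,
      derivative_sinhSeries, PowerSeries.derivative_C, Derivation.map_one_eq_zero]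
    ring
  · simp [constantCoeff_coshSeries, constantCoeff_sinhSeries]

theorem coeff_mul_C_add_mul_C_mul (f g h : PowerSeries ℝ) (a p : ℝ) (n : ℕ) :
    PowerSeries.coeff n (f * PowerSeries.C a + g * (PowerSeries.C p * h)) =
      ∑ x ∈ antidiagonal n, (PowerSeries.coeff x.1 f * (if x.2 = 0 then a else 0) +
        PowerSeries.coeff x.1 g * (p * PowerSeries.coeff x.2 h)) := by
  rw [map_add, PowerSeries.coeff_mul, PowerSeries.coeff_mul, ← sum_add_distrib]
  simp only [PowerSeries.coeff_C_mul, PowerSeries.coeff_C]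

theorem lastValueWeight_parityWeight_zero (p : ℝ) (e m : ℕ) :
    lastValueWeight (parityWeight p e) m 0 =
      if m = 0 then 1 else if Even (m + e) then 0 else
        p * lastValueWeight (parityWeight p e) m m := by
  cases m with
  | zero => simp [lastValueWeight]
  | succ m =>
    have : m + 1 + e = m + e + 1 := by ring
    simp only [lastValueWeight_succ_zero, parityWeight, this, Nat.even_add_one]
    split_ifs <;> simp_all

theorem lastValueWeight_parityWeight_self_div_factorial (p : ℝ) (e n : ℕ) :
    lastValueWeight (parityWeight p e) n n / n.factorial = ∑ x ∈ antidiagonal n,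
      (if Even (x.2 + e) then (1 - p) ^ ((x.1 + 1) / 2) else (1 - p) ^ (x.1 / 2)) /
        x.1.factorial * ((if x.2 = 0 then 1 else if Even (x.2 + e) then 0 else
          p * lastValueWeight (parityWeight p e) x.2 x.2) / x.2.factorial) := by
  simp only [lastValueWeight_self_div_factorial _ n, prod_one_sub_parityWeight,
    lastValueWeight_parityWeight_zero]

theorem evenSeries_parityWeight_one (p : ℝ) :
    evenSeries (fun n => lastValueWeight (parityWeight p 1) n n) =
      coshSeries (1 - p) * PowerSeries.C (1 - p) + coshSeries (1 - p) * (PowerSeries.C p *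
        evenSeries (fun n => lastValueWeight (parityWeight p 1) n n)) := by
  ext n
  rw [coeff_mul_C_add_mul_C_mul]
  simp only [evenSeries, coshSeries, PowerSeries.coeff_mk]
  split_ifs with hn; swap
  · refine (sum_eq_zero ?_).symm
    rintro ⟨k, m⟩ hx
    obtain rfl : k + m = n := mem_antidiagonal.mp hx
    rcases eq_or_ne m 0 with rfl | hm
    · by_cases hk : Even k <;> simp_all [-Nat.not_even_iff_odd]
    · by_cases hk : Even k <;> by_cases hm' : Even m <;>
        simp_all [Nat.even_add, -Nat.not_even_iff_odd]
  · rw [lastValueWeight_parityWeight_self_div_factorial]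
    refine sum_congr rfl ?_
    rintro ⟨k, m⟩ hx
    obtain rfl : k + m = n := mem_antidiagonal.mp hx
    have hk₁ : Even k → (k + 1) / 2 = k / 2 := by grind
    have hk₂ : ¬ Even k → (k + 1) / 2 = k / 2 + 1 := by grind
    rcases eq_or_ne m 0 with rfl | hm
    · by_cases hk : Even k <;> simp_all [lastValueWeight,
        -Nat.not_even_iff_odd, -mul_eq_mul_left_iff, -mul_eq_mul_right_iff] <;>
      ring
    · by_cases hk : Even k <;> by_cases hm' : Even m <;> simp_all [Nat.even_add,
        -Nat.not_even_iff_odd, -mul_eq_mul_left_iff, -mul_eq_mul_right_iff] <;>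
      ring

theorem oddSeries_parityWeight_one (p : ℝ) :
    oddSeries (fun n => lastValueWeight (parityWeight p 1) n n) =
      sinhSeries (1 - p) * PowerSeries.C (1 - p) + sinhSeries (1 - p) * (PowerSeries.C p *
        evenSeries (fun n => lastValueWeight (parityWeight p 1) n n)) := by
  ext n
  rw [coeff_mul_C_add_mul_C_mul]
  simp only [evenSeries, oddSeries, sinhSeries, PowerSeries.coeff_mk]
  split_ifs with hn
  · refine (sum_eq_zero ?_).symm
    rintro ⟨k, m⟩ hx
    obtain rfl : k + m = n := mem_antidiagonal.mp hx
    rcases eq_or_ne m 0 with rfl | hm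
    · by_cases hk : Even k <;> simp_all [-Nat.not_even_iff_odd]
    · by_cases hk : Even k <;> by_cases hm' : Even m <;>
        simp_all [Nat.even_add, -Nat.not_even_iff_odd]
  · rw [lastValueWeight_parityWeight_self_div_factorial]
    refine sum_congr rfl ?_
    rintro ⟨k, m⟩ hx
    obtain rfl : k + m = n := mem_antidiagonal.mp hx
    have hk₁ : Even k → (k + 1) / 2 = k / 2 := by grind
    have hk₂ : ¬ Even k → (k + 1) / 2 = k / 2 + 1 := by grind
    rcases eq_or_ne m 0 with rfl | hm
    · by_cases hk : Even k <;> simp_all [lastValueWeight,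
        -Nat.not_even_iff_odd, -mul_eq_mul_left_iff, -mul_eq_mul_right_iff] <;>
      ring
    · by_cases hk : Even k <;> by_cases hm' : Even m <;> simp_all [Nat.even_add,
        -Nat.not_even_iff_odd, -mul_eq_mul_left_iff, -mul_eq_mul_right_iff] <;>
      ring

theorem oddSeries_parityWeight_zero (p : ℝ) :
    oddSeries (fun n => lastValueWeight (parityWeight p 0) n n) =
      sinhSeries (1 - p) * PowerSeries.C (1 - p) + coshSeries (1 - p) * (PowerSeries.C p *
        oddSeries (fun n => lastValueWeight (parityWeight p 0) n n)) := by
  ext n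
  rw [coeff_mul_C_add_mul_C_mul]
  simp only [evenSeries, oddSeries, coshSeries, sinhSeries, PowerSeries.coeff_mk]
  split_ifs with hn
  · refine (sum_eq_zero ?_).symm
    rintro ⟨k, m⟩ hx
    obtain rfl : k + m = n := mem_antidiagonal.mp hx
    rcases eq_or_ne m 0 with rfl | hm
    · by_cases hk : Even k <;> simp_all [-Nat.not_even_iff_odd]
    · by_cases hk : Even k <;> by_cases hm' : Even m <;>
        simp_all [Nat.even_add, -Nat.not_even_iff_odd]
  · rw [lastValueWeight_parityWeight_self_div_factorial]
    refine sum_congr rfl ?_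
    rintro ⟨k, m⟩ hx
    obtain rfl : k + m = n := mem_antidiagonal.mp hx
    have hk₁ : Even k → (k + 1) / 2 = k / 2 := by grind
    have hk₂ : ¬ Even k → (k + 1) / 2 = k / 2 + 1 := by grind
    rcases eq_or_ne m 0 with rfl | hm
    · by_cases hk : Even k <;>
        simp_all [-Nat.not_even_iff_odd, -mul_eq_mul_left_iff, -mul_eq_mul_right_iff] <;>
      ring
    · by_cases hk : Even k <;> by_cases hm' : Even m <;> simp_all [Nat.even_add,
        -Nat.not_even_iff_odd, -mul_eq_mul_left_iff, -mul_eq_mul_right_iff] <;>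
      ring

theorem evenSeries_parityWeight_zero (p : ℝ) :
    evenSeries (fun n => lastValueWeight (parityWeight p 0) n n) =
      coshSeries (1 - p) * PowerSeries.C 1 + sinhSeries (1 - p) * (PowerSeries.C p *
        oddSeries (fun n => lastValueWeight (parityWeight p 0) n n)) := by
  ext n
  rw [coeff_mul_C_add_mul_C_mul]
  simp only [evenSeries, oddSeries, coshSeries, sinhSeries, PowerSeries.coeff_mk]
  split_ifs with hn; swap
  · refine (sum_eq_zero ?_).symm
    rintro ⟨k, m⟩ hx
    obtain rfl : k + m = n := mem_antidiagonal.mp hx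
    rcases eq_or_ne m 0 with rfl | hm
    · by_cases hk : Even k <;> simp_all [-Nat.not_even_iff_odd]
    · by_cases hk : Even k <;> by_cases hm' : Even m <;>
        simp_all [Nat.even_add, -Nat.not_even_iff_odd]
  · rw [lastValueWeight_parityWeight_self_div_factorial]
    refine sum_congr rfl ?_
    rintro ⟨k, m⟩ hx
    obtain rfl : k + m = n := mem_antidiagonal.mp hx
    have hk₁ : Even k → (k + 1) / 2 = k / 2 := by grind
    have hk₂ : ¬ Even k → (k + 1) / 2 = k / 2 + 1 := by grind
    rcases eq_or_ne m 0 with rfl | hm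
    · by_cases hk : Even k <;>
        simp_all [-Nat.not_even_iff_odd, -mul_eq_mul_left_iff, -mul_eq_mul_right_iff]
    · by_cases hk : Even k <;> by_cases hm' : Even m <;> simp_all [Nat.even_add,
        -Nat.not_even_iff_odd, -mul_eq_mul_left_iff, -mul_eq_mul_right_iff] <;>
      ring

theorem one_sub_C_mul_coshSeries_ne_zero {p : ℝ} (hp : p ≠ 1) :
    1 - PowerSeries.C p * coshSeries (1 - p) ≠ 0 := by
  intro h
  have h₀ := congrArg PowerSeries.constantCoeff h
  simp only [map_sub, map_one, map_mul, PowerSeries.constantCoeff_C, constantCoeff_coshSeries,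
    mul_one, map_zero] at h₀
  exact hp (sub_eq_zero.mp h₀).symm

theorem oddSeries_parityWeight_eq {p : ℝ} (hp : p ≠ 1) :
    oddSeries (fun n => lastValueWeight (parityWeight p 0) n n) =
      oddSeries (fun n => lastValueWeight (parityWeight p 1) n n) := by
  refine mul_left_cancel₀ (one_sub_C_mul_coshSeries_ne_zero hp) ?_
  have h₁ := evenSeries_parityWeight_one p
  have h₂ := oddSeries_parityWeight_one p
  have h₃ := oddSeries_parityWeight_zero p
  linear_combination h₃ - (1 - PowerSeries.C p * coshSeries (1 - p)) * h₂ -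
    PowerSeries.C p * sinhSeries (1 - p) * h₁

theorem evenSeries_parityWeight_sub_one_eq {p : ℝ} (hp : p ≠ 1) :
    evenSeries (fun n => lastValueWeight (parityWeight p 0) n n) - 1 =
      PowerSeries.C (1 + p) *
        (evenSeries (fun n => lastValueWeight (parityWeight p 1) n n) - 1) := by
  refine mul_left_cancel₀ (one_sub_C_mul_coshSeries_ne_zero hp) ?_
  have h₁ := evenSeries_parityWeight_one p
  have h₂ := oddSeries_parityWeight_zero p
  have h₃ := evenSeries_parityWeight_zero p
  have h₄ := coshSeries_sq_sub (1 - p)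
  simp only [map_add, map_sub, map_one] at h₁ h₂ h₃ h₄ ⊢
  linear_combination (1 - PowerSeries.C p * coshSeries (1 - p)) * h₃ +
    PowerSeries.C p * sinhSeries (1 - p) * h₂ - (1 + PowerSeries.C p) * h₁ - PowerSeries.C p * h₄

theorem continuous_refinedEulerian_zero_right (n : ℕ) :
    Continuous fun p => refinedEulerian n p 0 := by
  unfold refinedEulerian
  fun_prop

theorem continuous_refinedEulerian_zero_left (n : ℕ) :
    Continuous fun p => refinedEulerian n 0 p := by
  unfold refinedEulerian
  fun_prop

/-- For n odd, A_n(p,0) = A_n(0,p); for n even, A_n(p,0) = (1+p)A_n(0,p). -/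
theorem refinedEulerian_p_zero_q_zero (n : ℕ) (hn : 1 ≤ n) (p : ℝ) :
    (Odd n → refinedEulerian n p 0 = refinedEulerian n 0 p) ∧
    (Even n → refinedEulerian n p 0 = (1 + p) * refinedEulerian n 0 p) := by
  obtain ⟨n, rfl⟩ : ∃ m, n = m + 1 := ⟨n - 1, by omega⟩
  have hr := continuous_refinedEulerian_zero_right (n + 1)
  have hl := continuous_refinedEulerian_zero_left (n + 1)
  have hd : Dense ({1}ᶜ : Set ℝ) := dense_compl_singleton 1
  have hf : ((n + 1).factorial : ℝ) ≠ 0 := Nat.cast_ne_zero.mpr (Nat.factorial_ne_zero _)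
  refine ⟨fun h => congrFun (hr.ext_on hd hl fun q hq => ?_) p,
    fun h => congrFun (hr.ext_on hd (show Continuous fun q => (1 + q) * _ from
      (continuous_const.add continuous_id).mul hl)
      fun q hq => ?_) p⟩
  · have hc := congrArg (PowerSeries.coeff (n + 1)) (oddSeries_parityWeight_eq hq)
    simp only [oddSeries, PowerSeries.coeff_mk, if_neg (Nat.not_even_iff_odd.mpr h)] at hc
    simpa only [refinedEulerian_zero_right, refinedEulerian_zero_left, div_left_inj' hf] using hc
  · have hc := congrArg (PowerSeries.coeff (n + 1)) (evenSeries_parityWeight_sub_one_eq hq)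
    simp only [evenSeries, map_sub, PowerSeries.coeff_C_mul, PowerSeries.coeff_mk, if_pos h,
      PowerSeries.coeff_one, Nat.succ_ne_zero, if_false, sub_zero, ← mul_div_assoc,
      div_left_inj' hf] at hc
    simpa only [refinedEulerian_zero_right, refinedEulerian_zero_left] using hc
end

section
/- For all n ≥ k ≥ 0, A_{2n+2,k} = Σ_{2i+j = k or k-1, i,j ≥ 0} C(n-j, i) · 2^j · a_{2n+2,j}, where A_{m,k} is the Eulerian number and a_{m,j} counts permutations of [m] with j even descents and no odd descents. -/
open Finset

/-- The permutation of `Fin (m + 1)` with last value `j` whose other values are ordered as in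
`σ`. -/
def insertLast {m : ℕ} (j : Fin (m + 1)) (σ : Equiv.Perm (Fin m)) :
    Equiv.Perm (Fin (m + 1)) :=
  finSuccEquivLast.trans ((Equiv.optionCongr σ).trans (finSuccEquiv' j).symm)

@[simp]
lemma insertLast_last {m : ℕ} (j : Fin (m + 1)) (σ : Equiv.Perm (Fin m)) :
    insertLast j σ (Fin.last m) = j := by
  simp [insertLast]

@[simp]
lemma insertLast_castSucc {m : ℕ} (j : Fin (m + 1)) (σ : Equiv.Perm (Fin m)) (i : Fin m) :
    insertLast j σ i.castSucc = j.succAbove (σ i) := by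
  simp [insertLast]

lemma insertLast_bijective (m : ℕ) :
    Function.Bijective
      (fun a : Fin (m + 1) × Equiv.Perm (Fin m) => insertLast a.1 a.2) := by
  rw [Fintype.bijective_iff_injective_and_card]
  constructor
  · rintro ⟨j, σ⟩ ⟨j', σ'⟩ h
    have hj : j = j' := by
      simpa using DFunLike.congr_fun h (Fin.last m)
    subst hj
    refine Prod.ext rfl (Equiv.ext fun i => ?_)
    simpa using DFunLike.congr_fun h i.castSucc
  · simp [Fintype.card_perm, Nat.factorial_succ]

lemma descentSet_insertLast {m : ℕ} (j : Fin (m + 2)) (σ : Equiv.Perm (Fin (m + 1))) :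
    descentSet (insertLast j σ) =
      if j ≤ (σ (Fin.last m)).castSucc then insert m (descentSet σ) else descentSet σ := by
  have key : ∀ i, i ∈ descentSet (insertLast j σ) ↔
      i ∈ descentSet σ ∨ (i = m ∧ j ≤ (σ (Fin.last m)).castSucc) := by
    intro i
    simp only [descentSet, mem_filter, mem_range]
    rcases lt_trichotomy i m with hi | rfl | hi
    · have h1 : (⟨i + 1, by omega⟩ : Fin (m + 2)) = Fin.castSucc ⟨i + 1, by omega⟩ := rfl
      have h2 : (⟨i, by omega⟩ : Fin (m + 2)) = Fin.castSucc ⟨i, by omega⟩ := rfl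
      have h3 : i < m + 1 := by omega
      have h4 : i < m + 1 + 1 := by omega
      have h5 : i ≠ m := by omega
      simp [h1, h2, h3, h4, h5, hi, insertLast_castSucc, -Fin.castSucc_mk]
      exact fun _ => hi.le
    · have h1 : (⟨i + 1, by omega⟩ : Fin (i + 2)) = Fin.last (i + 1) := rfl
      have h2 : (⟨i, by omega⟩ : Fin (i + 2)) = Fin.castSucc (Fin.last i) := rfl
      simp [h1, h2, insertLast_castSucc, insertLast_last, Fin.lt_succAbove_iff_le_castSucc,
        -Fin.castSucc_mk]
    · have h1 : ¬ i < m := by omega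
      have h2 : i ≠ m := by omega
      simp [h1, h2]
      exact fun _ _ => by omega
  ext i
  rw [key]
  split_ifs with h <;> simp [h, or_comm]

/-- The sum over permutations of `Fin m` of the product of the weights `x i` of the descent
indices `i`. -/
def descentSum (x : ℕ → ℝ) (m : ℕ) : ℝ :=
  ∑ π : Equiv.Perm (Fin m), ∏ i ∈ descentSet π, x i

/-- The part of `descentSum x (m + 1)` coming from the permutations with last value `j`. -/
def descentSumLast (x : ℕ → ℝ) (m : ℕ) (j : Fin (m + 1)) : ℝ :=
  ∑ σ : Equiv.Perm (Fin m), ∏ i ∈ descentSet (insertLast j σ), x i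

lemma sum_insertLast {m : ℕ} (f : Equiv.Perm (Fin (m + 1)) → ℝ) :
    ∑ π, f π = ∑ j, ∑ σ : Equiv.Perm (Fin m), f (insertLast j σ) := by
  rw [← Fintype.sum_prod_type']
  exact ((insertLast_bijective m).sum_comp f).symm

lemma descentSum_succ (x : ℕ → ℝ) (m : ℕ) :
    descentSum x (m + 1) = ∑ j, descentSumLast x m j :=
  sum_insertLast _

lemma prod_descentSet_insertLast (x : ℕ → ℝ) {m : ℕ} (j : Fin (m + 2))
    (σ : Equiv.Perm (Fin (m + 1))) :
    ∏ i ∈ descentSet (insertLast j σ), x i =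
      (x m + if (σ (Fin.last m)).castSucc < j then 1 - x m else 0) *
        ∏ i ∈ descentSet σ, x i := by
  have hm : m ∉ descentSet σ := by simp [descentSet]
  rw [descentSet_insertLast]
  by_cases h : j ≤ (σ (Fin.last m)).castSucc
  · simp [h, not_lt.mpr h, prod_insert hm]
  · simp [h, not_le.mp h]

lemma descentSumLast_succ (x : ℕ → ℝ) (m : ℕ) (j : Fin (m + 2)) :
    descentSumLast x (m + 1) j = x m * descentSum x (m + 1) +
      (1 - x m) * ∑ i : Fin (m + 1), if i.castSucc < j then descentSumLast x m i else 0 := by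
  rw [descentSum_succ, descentSumLast, sum_insertLast, mul_sum, mul_sum, ← sum_add_distrib]
  refine sum_congr rfl fun i _ => ?_
  simp only [prod_descentSet_insertLast x j, insertLast_last, ← mul_sum]
  rw [← descentSumLast]
  split_ifs <;> ring

/-- The weight of a descent between position `l` and the following one, times `descentSum x l`,
with the value `1` at `l = 0`. -/
def cutWeight (x : ℕ → ℝ) : ℕ → ℝ
  | 0 => 1
  | l + 1 => x l * descentSum x (l + 1)

lemma sum_range_choose_right (n k : ℕ) :
    ∑ i ∈ range n, (i.choose k : ℝ) = (n.choose (k + 1) : ℝ) := by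
  induction n with
  | zero => simp
  | succ n ih => rw [sum_range_succ, ih, Nat.choose_succ_succ]; push_cast; ring

lemma descentSumLast_eq (x : ℕ → ℝ) (m : ℕ) (j : Fin (m + 1)) :
    descentSumLast x m j = ∑ l ∈ range (m + 1),
      cutWeight x l * (∏ i ∈ Ico l m, (1 - x i)) * ((j : ℕ).choose (m - l) : ℝ) := by
  induction m with
  | zero =>
    have hd : descentSet (insertLast j (1 : Equiv.Perm (Fin 0))) = ∅ := by
      ext i; simp [descentSet]
    simp [descentSumLast, cutWeight, hd, Subsingleton.elim default
      (1 : Equiv.Perm (Fin 0))]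
  | succ m ih =>
    have hfin : (∑ i : Fin (m + 1), if i.castSucc < j then descentSumLast x m i else 0) =
        ∑ i ∈ range j, ∑ l ∈ range (m + 1),
          cutWeight x l * (∏ i ∈ Ico l m, (1 - x i)) * ((i : ℕ).choose (m - l) : ℝ) := by
      simp only [ih, Fin.lt_def, Fin.val_castSucc]
      rw [Fin.sum_univ_eq_sum_range (fun i => if i < (j : ℕ) then ∑ l ∈ range (m + 1),
          cutWeight x l * (∏ i ∈ Ico l m, (1 - x i)) * ((i : ℕ).choose (m - l) : ℝ) else 0)
          (m + 1), ← sum_filter]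
      refine sum_congr ?_ fun _ _ => rfl
      ext i
      have := j.isLt
      simp only [mem_filter, mem_range]
      omega
    rw [descentSumLast_succ, hfin, sum_range_succ, sum_comm, mul_sum, add_comm]
    congr 1
    · refine sum_congr rfl fun l hl => ?_
      have hl' : l ≤ m := by simpa [Nat.lt_succ_iff] using hl
      have hs : ∑ i ∈ range (j : ℕ), (i.choose (m - l) : ℝ) =
          ((j : ℕ).choose (m + 1 - l) : ℝ) := by
        rw [Nat.succ_sub hl']
        exact sum_range_choose_right _ _
      rw [← mul_sum, hs, prod_Ico_succ_top hl']
      ring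
    · simp [cutWeight]

/-- The decomposition of a weighted descent sum along the last cut. -/
lemma descentSum_eq (x : ℕ → ℝ) (m : ℕ) :
    descentSum x (m + 1) = ∑ l ∈ range (m + 1),
      cutWeight x l * (∏ i ∈ Ico l m, (1 - x i)) * ((m + 1).choose l : ℝ) := by
  rw [descentSum_succ]
  simp only [descentSumLast_eq]
  rw [sum_comm]
  refine sum_congr rfl fun l hl => ?_
  have hl' : l ≤ m := by simpa [Nat.lt_succ_iff] using hl
  rw [← mul_sum, Fin.sum_univ_eq_sum_range (fun j => (j.choose (m - l) : ℝ))]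
  congr 1
  rw [← Nat.choose_symm (show l ≤ m + 1 by omega), Nat.succ_sub hl']
  exact sum_range_choose_right _ _

/-- The weights `0` at odd positions and `y` at even (1-based) positions. -/
def evenWeight (y : ℝ) (i : ℕ) : ℝ := if Even i then 0 else y

lemma prod_one_sub_evenWeight (y : ℝ) (a d : ℕ) :
    ∏ i ∈ Ico (2 * a) (2 * (a + d) + 1), (1 - evenWeight y i) = (1 - y) ^ d := by
  induction d with
  | zero => simp [evenWeight]
  | succ d ih =>
    rw [show 2 * (a + (d + 1)) + 1 = 2 * (a + d) + 1 + 1 + 1 by ring,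
      prod_Ico_succ_top (by omega), prod_Ico_succ_top (by omega), ih]
    have h1 : ¬ Even (2 * (a + d) + 1) := by simp
    have h2 : Even (2 * (a + d) + 1 + 1) := ⟨a + d + 1, by ring⟩
    simp only [evenWeight, h1, h2, if_true, if_false]
    ring

lemma cutWeight_evenWeight_odd (y : ℝ) (a : ℕ) : cutWeight (evenWeight y) (2 * a + 1) = 0 := by
  simp [cutWeight, evenWeight]

/-- The exponential generating function of the Eulerian polynomials at `q`. -/
noncomputable def eulerianEGF (q : ℝ) : PowerSeries ℝ :=
  PowerSeries.mk fun m => if m = 0 then 0 else descentSum (fun _ => q) m / (m.factorial : ℝ)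

lemma eulerianEGF_mul (q : ℝ) :
    eulerianEGF q * (1 - PowerSeries.C q * PowerSeries.rescale (1 - q) (PowerSeries.exp ℝ)) =
      PowerSeries.rescale (1 - q) (PowerSeries.exp ℝ) - 1 := by
  set e := PowerSeries.rescale (1 - q) (PowerSeries.exp ℝ) with he
  have key : PowerSeries.C (1 - q) * eulerianEGF q =
      (1 + PowerSeries.C q * eulerianEGF q) * (e - 1) := by
    have hD : (1 + PowerSeries.C q * eulerianEGF q) =
        PowerSeries.mk fun l => cutWeight (fun _ => q) l / (l.factorial : ℝ) := by
      ext l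
      cases l with
      | zero => simp [eulerianEGF, cutWeight]
      | succ l => simp [eulerianEGF, cutWeight, PowerSeries.coeff_one, mul_div_assoc]
    rw [hD]
    ext m
    cases m with
    | zero => simp [eulerianEGF, he, PowerSeries.coeff_mul, PowerSeries.coeff_rescale,
        -PowerSeries.coeff_zero_eq_constantCoeff]
    | succ m =>
      rw [PowerSeries.coeff_C_mul, PowerSeries.coeff_mul,
        Nat.sum_antidiagonal_eq_sum_range_succ_mk, sum_range_succ]
      simp only [eulerianEGF, PowerSeries.coeff_mk, descentSum_eq,
        Nat.succ_ne_zero, if_false, sum_div, mul_sum, he, map_sub, PowerSeries.coeff_rescale,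
        PowerSeries.coeff_exp, PowerSeries.coeff_one, Nat.sub_self]
      simp only [pow_zero, Nat.factorial_zero, if_true]
      norm_num
      refine sum_congr rfl fun l hl => ?_
      have hl' : l ≤ m := by simpa [Nat.lt_succ_iff] using hl
      have h0 : m + 1 - l ≠ 0 := by omega
      rw [if_neg h0, Nat.cast_choose ℝ (show l ≤ m + 1 by omega), Nat.succ_sub hl', pow_succ]
      have := Nat.factorial_ne_zero l
      have := Nat.factorial_ne_zero (m + 1)
      have := Nat.factorial_ne_zero (m - l).succ
      field_simp
      ring
  simp only [map_sub, map_one] at key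
  linear_combination key

/-- Twice the hyperbolic cosine of `w t`, minus two, as a power series in `t`. -/
noncomputable def twoCoshSubTwo (w : ℝ) : PowerSeries ℝ :=
  PowerSeries.rescale w (PowerSeries.exp ℝ) + PowerSeries.rescale (-w) (PowerSeries.exp ℝ) -
    PowerSeries.C 2

lemma eulerianEGF_even_mul (q : ℝ) :
    (eulerianEGF q + PowerSeries.rescale (-1) (eulerianEGF q)) *
      (PowerSeries.C ((1 - q) ^ 2) - PowerSeries.C q * twoCoshSubTwo (1 - q)) =
      PowerSeries.C (1 + q) * twoCoshSubTwo (1 - q) := by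
  have h1 := eulerianEGF_mul q
  have h2 := congrArg (PowerSeries.rescale (-1)) h1
  simp only [map_mul, map_sub, map_one, PowerSeries.rescale_rescale] at h2
  have h3 : PowerSeries.rescale (-1 : ℝ) (PowerSeries.C q) = PowerSeries.C q := by
    ext n; cases n <;> simp [PowerSeries.coeff_rescale, PowerSeries.coeff_C]
  rw [h3, mul_neg_one] at h2
  have h4 := PowerSeries.exp_mul_exp_eq_exp_add (1 - q) (-(1 - q))
  rw [add_neg_cancel] at h4
  simp at h4
  simp only [twoCoshSubTwo, map_sub, map_one, map_add, map_pow, map_ofNat]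
  rw [neg_sub] at *
  set e := PowerSeries.rescale (1 - q) (PowerSeries.exp ℝ)
  set e' := PowerSeries.rescale (q - 1) (PowerSeries.exp ℝ)
  set E := eulerianEGF q
  set E' := PowerSeries.rescale (-1) E
  set Q : PowerSeries ℝ := PowerSeries.C q
  linear_combination (1 - Q * e') * h1 + (1 - Q * e) * h2 + (-(E + E') * Q ^ 2 - 2 * Q) * h4

lemma coeff_twoCoshSubTwo_odd (w : ℝ) {m : ℕ} (hm : ¬ Even m) :
    PowerSeries.coeff m (twoCoshSubTwo w) = 0 := by
  have h0 : m ≠ 0 := by rintro rfl; simp at hm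
  have := (Nat.not_even_iff_odd.mp hm).neg_pow w
  simp [twoCoshSubTwo, PowerSeries.coeff_rescale, this, PowerSeries.coeff_C, h0]

lemma coeff_twoCoshSubTwo_zero (w : ℝ) : PowerSeries.coeff 0 (twoCoshSubTwo w) = 0 := by
  simp [twoCoshSubTwo, PowerSeries.coeff_rescale, PowerSeries.coeff_C,
    -PowerSeries.coeff_zero_eq_constantCoeff]
  norm_num

lemma coeff_twoCoshSubTwo_even (w : ℝ) (b : ℕ) :
    PowerSeries.coeff (2 * (b + 1)) (twoCoshSubTwo w) =
      2 * (w ^ 2) ^ (b + 1) / ((2 * (b + 1)).factorial : ℝ) := by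
  have := (even_two_mul (b + 1)).neg_pow w
  simp [twoCoshSubTwo, PowerSeries.coeff_rescale, this, PowerSeries.coeff_C, ← pow_mul]
  ring

/-- The rescaled exponential generating function of the polynomials `∑ⱼ a_{2m,j} yʲ` at
`y = 2q / (1 + q²)`. -/
noncomputable def evenDescentEGF (q : ℝ) : PowerSeries ℝ :=
  PowerSeries.mk fun m => if Even m ∧ m ≠ 0 then
    (1 + q ^ 2) ^ (m / 2) * descentSum (evenWeight (2 * q / (1 + q ^ 2))) m / (m.factorial : ℝ)
  else 0

/-- The rescaled even part of the generating function of `cutWeight`. -/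
noncomputable def evenCutEGF (q : ℝ) : PowerSeries ℝ :=
  PowerSeries.mk fun m => if Even m then
    (1 + q ^ 2) ^ (m / 2) * cutWeight (evenWeight (2 * q / (1 + q ^ 2))) m / (m.factorial : ℝ)
  else 0

lemma evenCutEGF_eq (q : ℝ) :
    PowerSeries.C (1 + q ^ 2) * evenCutEGF q =
      PowerSeries.C (1 + q ^ 2) + PowerSeries.C (2 * q) * evenDescentEGF q := by
  ext m
  have hq : 1 + q ^ 2 ≠ 0 := by positivity
  rw [map_add (PowerSeries.coeff m), PowerSeries.coeff_C_mul, PowerSeries.coeff_C_mul, evenCutEGF, evenDescentEGF,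
    PowerSeries.coeff_mk, PowerSeries.coeff_mk, PowerSeries.coeff_C]
  cases m with
  | zero => simp [cutWeight]
  | succ m =>
    by_cases hm : Even (m + 1)
    · have hm' : ¬ Even m := by rwa [Nat.even_add_one] at hm
      simp only [hm, cutWeight, evenWeight, hm', if_true, if_false, ne_eq, Nat.succ_ne_zero,
        not_false_eq_true, and_self, zero_add]
      field_simp
    · simp [hm]

lemma evenDescentEGF_eq (q : ℝ) :
    PowerSeries.C (2 * (1 - q) ^ 2) * evenDescentEGF q =
      PowerSeries.C (1 + q ^ 2) * evenCutEGF q * twoCoshSubTwo (1 - q) := by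
  have hq : 1 + q ^ 2 ≠ 0 := by positivity
  ext M
  rw [mul_assoc, PowerSeries.coeff_C_mul, PowerSeries.coeff_C_mul, PowerSeries.coeff_mul,
    Nat.sum_antidiagonal_eq_sum_range_succ_mk]
  by_cases hM : Even M
  · obtain ⟨N, rfl⟩ := even_iff_two_dvd.mp hM
    cases N with
    | zero => simp [evenDescentEGF, coeff_twoCoshSubTwo_zero, -PowerSeries.coeff_zero_eq_constantCoeff]
    | succ n =>
      rw [sum_range_succ, Nat.sub_self, coeff_twoCoshSubTwo_zero, mul_zero, add_zero,
        evenDescentEGF, PowerSeries.coeff_mk, if_pos ⟨hM, by omega⟩,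
        show 2 * (n + 1) = 2 * n + 1 + 1 by ring, descentSum_eq, mul_sum, sum_div, mul_sum,
        mul_sum]
      refine sum_congr rfl fun l hl => ?_
      rw [mem_range] at hl
      by_cases hl2 : Even l
      · obtain ⟨a, rfl⟩ := even_iff_two_dvd.mp hl2
        obtain ⟨d, rfl⟩ := Nat.exists_eq_add_of_le (show a ≤ n by omega)
        rw [prod_one_sub_evenWeight, evenCutEGF, PowerSeries.coeff_mk, if_pos hl2,
          show 2 * (a + d) + 1 + 1 - 2 * a = 2 * (d + 1) by omega, coeff_twoCoshSubTwo_even,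
          Nat.cast_choose ℝ (by omega), show 2 * (a + d) + 1 + 1 - 2 * a = 2 * (d + 1) by omega,
          show (2 * (a + d) + 1 + 1) / 2 = a + d + 1 by omega,
          Nat.mul_div_cancel_left _ two_pos,
          show 1 - 2 * q / (1 + q ^ 2) = (1 - q) ^ 2 / (1 + q ^ 2) by field_simp; ring]
        have := Nat.factorial_ne_zero (2 * a)
        have := Nat.factorial_ne_zero (2 * (d + 1))
        have := Nat.factorial_ne_zero (2 * (a + d) + 1 + 1)
        rw [div_pow]
        field_simp
        ring
      · obtain ⟨a, rfl⟩ := Nat.not_even_iff_odd.mp hl2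
        rw [cutWeight_evenWeight_odd, evenCutEGF, PowerSeries.coeff_mk, if_neg hl2]
        simp
  · rw [evenDescentEGF, PowerSeries.coeff_mk, if_neg (by tauto), mul_zero, sum_eq_zero, mul_zero]
    intro l hl
    have hl' : l ≤ M := by simpa [Nat.lt_succ_iff] using hl
    by_cases hl2 : Even l
    · rw [coeff_twoCoshSubTwo_odd _ (by rw [Nat.even_sub hl']; tauto), mul_zero]
    · rw [evenCutEGF, PowerSeries.coeff_mk, if_neg hl2, zero_mul]

lemma eulerianEGF_even_eq (q : ℝ) (hq : q ≠ 1) :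
    PowerSeries.C (1 + q ^ 2) *
      (eulerianEGF q + PowerSeries.rescale (-1) (eulerianEGF q)) =
      PowerSeries.C (2 * (1 + q)) * evenDescentEGF q := by
  have h1 := eulerianEGF_even_mul q
  have h2 := evenDescentEGF_eq q
  rw [evenCutEGF_eq] at h2
  have hH : PowerSeries.C ((1 - q) ^ 2) - PowerSeries.C q * twoCoshSubTwo (1 - q) ≠ 0 := by
    intro h
    have h0 := congrArg (PowerSeries.coeff 0) h
    rw [map_sub, PowerSeries.coeff_C_mul, coeff_twoCoshSubTwo_zero] at h0
    simp [sub_eq_zero] at h0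
    exact hq h0.symm
  refine mul_right_cancel₀ hH ?_
  simp only [map_mul, map_add, map_one, map_pow, map_sub, map_ofNat] at *
  linear_combination (1 + PowerSeries.C q ^ 2) * h1 - (1 + PowerSeries.C q) * h2

lemma descentSum_const_eq (q : ℝ) (hq : q ≠ 1) (n : ℕ) :
    descentSum (fun _ => q) (2 * n + 2) =
      (1 + q) * ((1 + q ^ 2) ^ n *
        descentSum (evenWeight (2 * q / (1 + q ^ 2))) (2 * n + 2)) := by
  have h := congrArg (PowerSeries.coeff (2 * n + 2)) (eulerianEGF_even_eq q hq)
  have he : Even (2 * n + 2) := ⟨n + 1, by ring⟩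
  have hq' : 1 + q ^ 2 ≠ 0 := by positivity
  rw [PowerSeries.coeff_C_mul, PowerSeries.coeff_C_mul] at h
  simp only [map_add, PowerSeries.coeff_rescale, eulerianEGF,
    evenDescentEGF, PowerSeries.coeff_mk, he.neg_one_pow, one_mul, he, true_and, ne_eq,
    Nat.succ_ne_zero, not_false_eq_true, if_true, if_false,
    show (2 * n + 2) / 2 = n + 1 by omega] at h
  have := Nat.factorial_ne_zero (2 * n + 2)
  set S := descentSum (evenWeight (2 * q / (1 + q ^ 2))) (2 * n + 2)
  field_simp at h
  refine mul_left_cancel₀ hq' ?_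
  linear_combination h / 2

lemma descentSum_const (q : ℝ) (m : ℕ) :
    descentSum (fun _ => q) m = ∑ π : Equiv.Perm (Fin m), q ^ des π := by
  simp [descentSum, des]

lemma prod_evenWeight (y : ℝ) {m : ℕ} (π : Equiv.Perm (Fin m)) :
    ∏ i ∈ descentSet π, evenWeight y i = if odes π = 0 then y ^ edes π else 0 := by
  simp only [evenWeight, prod_ite, prod_const, Nat.not_even_iff_odd]
  rw [← odes, ← edes]
  split_ifs with h <;> simp [h]

lemma edes_le (n : ℕ) (π : Equiv.Perm (Fin (2 * n + 2))) : edes π ≤ n := by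
  have hs : (descentSet π).filter (fun i => Odd i) ⊆ (range n).image (fun k => 2 * k + 1) := by
    intro i hi
    simp only [descentSet, mem_filter, mem_range] at hi
    obtain ⟨⟨_, h, _⟩, k, rfl⟩ := hi
    exact mem_image.mpr ⟨k, mem_range.mpr (by omega), rfl⟩
  exact (card_le_card hs).trans (card_image_le.trans (card_range n).le)

lemma descentSum_evenWeight (y : ℝ) (n : ℕ) :
    descentSum (evenWeight y) (2 * n + 2) =
      ∑ j ∈ range (n + 1), (aNum (2 * n + 2) j : ℝ) * y ^ j := by
  simp only [descentSum, prod_evenWeight]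
  rw [← sum_filter, ← sum_fiberwise_of_maps_to (g := edes) (t := range (n + 1))
    (fun π _ => mem_range.mpr (Nat.lt_succ_of_le (edes_le n π)))]
  refine sum_congr rfl fun j _ => ?_
  rw [sum_congr rfl (g := fun _ => y ^ j) (fun π hπ => by rw [(mem_filter.mp hπ).2]), sum_const,
    nsmul_eq_mul, filter_filter, aNum]
  simp only [and_comm]

lemma eulerianPolynomial_even_eq (n : ℕ) :
    eulerianPolynomial (2 * n + 2) = (1 + Polynomial.X) * ∑ j ∈ range (n + 1),
      Polynomial.C (2 ^ j * aNum (2 * n + 2) j : ℝ) * Polynomial.X ^ j *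
        (1 + Polynomial.X ^ 2) ^ (n - j) := by
  refine Polynomial.eq_of_infinite_eval_eq _ _ ((Set.finite_singleton (1 : ℝ)).infinite_compl.mono
    fun q hq => ?_)
  have hq' : 1 + q ^ 2 ≠ 0 := by positivity
  have h := descentSum_const_eq q hq n
  rw [descentSum_const, descentSum_evenWeight, mul_sum] at h
  simp only [Set.mem_ofPred_eq, eulerianPolynomial, Polynomial.eval_finsetSum, Polynomial.eval_mul,
    Polynomial.eval_add, Polynomial.eval_one, Polynomial.eval_X, Polynomial.eval_pow,
    Polynomial.eval_C]
  rw [h]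
  congr 1
  refine sum_congr rfl fun j hj => ?_
  obtain ⟨d, rfl⟩ := Nat.exists_eq_add_of_le (show j ≤ n by simpa [Nat.lt_succ_iff] using hj)
  rw [Nat.add_sub_cancel_left, div_pow, mul_pow, pow_add]
  field_simp

lemma coeff_eulerianPolynomial (m k : ℕ) :
    (eulerianPolynomial m).coeff k = eulerianNumber m k := by
  simp [eulerianPolynomial, eulerianNumber, Polynomial.coeff_X_pow,
    eq_comm]

lemma eulerianPolynomial_even_eq_sum (n : ℕ) :
    eulerianPolynomial (2 * n + 2) = ∑ j ∈ range (n + 1), ∑ i ∈ range (n - j + 1),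
      Polynomial.C ((n - j).choose i * 2 ^ j * aNum (2 * n + 2) j : ℝ) *
        (Polynomial.X ^ (2 * i + j) + Polynomial.X ^ (2 * i + j + 1)) := by
  rw [eulerianPolynomial_even_eq, mul_sum]
  refine sum_congr rfl fun j _ => ?_
  rw [add_comm (1 : Polynomial ℝ) (Polynomial.X ^ 2), add_pow, mul_sum, mul_sum]
  refine sum_congr rfl fun i _ => ?_
  simp only [map_mul, map_pow, map_natCast]
  ring

/-- A_{2n+2,k} = Σ_{2i+j = k or k-1} C(n-j, i) 2^j a_{2n+2,j}. -/
theorem eulerianNumber_even_expansion (n k : ℕ) (h : k ≤ n) :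
    eulerianNumber (2 * n + 2) k =
      ∑ ij ∈ (Finset.range (k + 1) ×ˢ Finset.range (k + 1)).filter
          (fun ij => (2 * ij.1 + ij.2 : ℤ) = (k : ℤ) ∨ (2 * ij.1 + ij.2 : ℤ) = (k : ℤ) - 1),
        (n - ij.2).choose ij.1 * 2 ^ ij.2 * aNum (2 * n + 2) ij.2 := by
  rw [← Nat.cast_inj (R := ℝ), ← coeff_eulerianPolynomial, eulerianPolynomial_even_eq_sum]
  simp only [Polynomial.finsetSum_coeff, Polynomial.coeff_C_mul, Polynomial.coeff_add,
    Polynomial.coeff_X_pow]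
  push_cast
  rw [sum_filter, sum_product_right]
  symm
  refine sum_subset_zero_on_sdiff (range_subset_range.mpr (by omega)) ?_ ?_
  · intro j hj
    simp only [mem_sdiff, mem_range] at hj
    refine sum_eq_zero fun i _ => ?_
    rw [if_neg (by omega), if_neg (by omega)]
    simp
  · intro j hj
    rw [mem_range] at hj
    have term : ∀ i : ℕ,
        (if (2 * i + j : ℤ) = (k : ℤ) ∨ (2 * i + j : ℤ) = (k : ℤ) - 1 then
          ((n - j).choose i : ℝ) * 2 ^ j * (aNum (2 * n + 2) j : ℝ) else 0) =
        ((n - j).choose i : ℝ) * 2 ^ j * (aNum (2 * n + 2) j : ℝ) *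
          ((if k = 2 * i + j then 1 else 0) + if k = 2 * i + j + 1 then 1 else 0) := by
      intro i
      by_cases h1 : k = 2 * i + j
      · rw [if_pos (by omega), if_pos h1, if_neg (by omega)]; ring
      · by_cases h2 : k = 2 * i + j + 1
        · rw [if_pos (by omega), if_neg h1, if_pos h2]; ring
        · rw [if_neg (by omega), if_neg h1, if_neg h2]; ring
    simp only [term]
    trans ∑ i ∈ range (n + 1), ((n - j).choose i : ℝ) * 2 ^ j * (aNum (2 * n + 2) j : ℝ) *
          ((if k = 2 * i + j then 1 else 0) + if k = 2 * i + j + 1 then 1 else 0)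
    · refine sum_subset (range_subset_range.mpr (by omega)) fun i _ hi => ?_
      rw [mem_range] at hi
      rw [if_neg (by omega), if_neg (by omega)]
      simp
    · refine (sum_subset (range_subset_range.mpr (by omega)) fun i _ hi => ?_).symm
      rw [mem_range] at hi
      rw [Nat.choose_eq_zero_of_lt (by omega)]
      simp
end
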